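/- The space of 4×4 skew-symmetric matrices B with entries homogeneous polynomials of degree k in four variables satisfying B x = 0 has dimension 3·dim(P̃^{k-1}(R^4)) + dim(P̃^{k-1}(R^3)), where P̃^m(R^n) denotes homogeneous polynomials of degree m in n variables; the first dimension is 3·binom(k+2,3) and the second is binom(k+1,2). -/

import Mathlib

/-!
Write `R = ℝ[x₁, x₂, x₃, x₄]`. A skew-symmetric `B` with `B x = 0` is a 2-form on `ℝ⁴` with
polynomial coefficients that is killed by contraction with the Euler field `x`, and the dimension
count is the exactness of the Koszul complex `R → R⁴ → ⋀² R⁴ → R⁴` in low degrees.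

* The matrices `p₁ B₁ + ⋯ + p₄ B₄` (`koszulMat p` below) satisfy the conditions, and they exhaust
  them: by Cartan's formula `dι + ιd = L` for the Euler field, `(k + 2) B` is the contraction of the
  3-form `dB` (`koszulMat_koszulHomotopy`), whose coefficients are homogeneous of degree `k - 1`.
* `koszulMat p = 0` says `pᵢ xⱼ = pⱼ xᵢ` for all `i, j`; since the variables are prime, this forces
  `p = q x` for a polynomial `q` (`exists_eq_X_mul`), homogeneous of degree `k - 2` if the `pᵢ` have
  degree `k - 1`.

Rank–nullity then gives the dimension `4 * (k+2).choose 3 - (k+1).choose 3`, which equals the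
claimed value by Pascal's rule.
-/

open MvPolynomial Matrix

theorem finrank_homogeneousSubmodule_four (m : ℕ) :
    Module.finrank ℝ (homogeneousSubmodule (Fin 4) ℝ m) = (m + 3).choose 3 := by
  have h : homogeneousSubmodule (Fin 4) ℝ m =
      restrictSupport ℝ {d : Fin 4 →₀ ℕ | d.degree = m} :=
    homogeneousSubmodule_eq_finsupp_supported _ _ _
  have e : {d : Fin 4 →₀ ℕ | d.degree = m} ≃ Sym (Fin 4) m :=
    (Equiv.subtypeEquivRight fun d => by
      simp [Finsupp.degree_apply, Finsupp.sum]).trans (Sym.equivNatSum (Fin 4) m).symm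
  rw [h, Module.finrank_eq_nat_card_basis (basisRestrictSupport ℝ _), Nat.card_congr e,
    Nat.card_eq_fintype_card, Sym.card_sym_eq_choose, Fintype.card_fin,
    show 4 + m - 1 = m + 3 by omega]
  exact Nat.choose_symm_add

instance finite_homogeneousSubmodule_four (m : ℕ) :
    Module.Finite ℝ (homogeneousSubmodule (Fin 4) ℝ m) :=
  Module.Finite.iff_fg.mpr (homogeneousSubmodule_fg _ _ m)

/-- The matrix `p₁ B₁ + p₂ B₂ + p₃ B₃ + p₄ B₄`, i.e. the contraction of the 3-form with
coefficients `p` with the Euler field. -/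
noncomputable def koszulMat :
    (Fin 4 → MvPolynomial (Fin 4) ℝ) →ₗ[ℝ] Matrix (Fin 4) (Fin 4) (MvPolynomial (Fin 4) ℝ) where
  toFun p :=
    !![0, p 2 * X 3 - p 3 * X 2, p 3 * X 1 - p 1 * X 3, p 1 * X 2 - p 2 * X 1;
      p 3 * X 2 - p 2 * X 3, 0, p 0 * X 3 - p 3 * X 0, p 2 * X 0 - p 0 * X 2;
      p 1 * X 3 - p 3 * X 1, p 3 * X 0 - p 0 * X 3, 0, p 0 * X 1 - p 1 * X 0;
      p 2 * X 1 - p 1 * X 2, p 0 * X 2 - p 2 * X 0, p 1 * X 0 - p 0 * X 1, 0]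
  map_add' p q := by
    ext1 i j
    fin_cases i <;> fin_cases j <;> simp <;> ring
  map_smul' c p := by
    ext1 i j
    fin_cases i <;> fin_cases j <;> simp [smul_sub]

theorem koszulMat_apply (p : Fin 4 → MvPolynomial (Fin 4) ℝ) : koszulMat p =
    !![0, p 2 * X 3 - p 3 * X 2, p 3 * X 1 - p 1 * X 3, p 1 * X 2 - p 2 * X 1;
      p 3 * X 2 - p 2 * X 3, 0, p 0 * X 3 - p 3 * X 0, p 2 * X 0 - p 0 * X 2;
      p 1 * X 3 - p 3 * X 1, p 3 * X 0 - p 0 * X 3, 0, p 0 * X 1 - p 1 * X 0;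
      p 2 * X 1 - p 1 * X 2, p 0 * X 2 - p 2 * X 0, p 1 * X 0 - p 0 * X 1, 0] := rfl

theorem koszulMat_transpose (p : Fin 4 → MvPolynomial (Fin 4) ℝ) :
    (koszulMat p)ᵀ = -koszulMat p := by
  rw [koszulMat_apply]
  ext1 i j
  fin_cases i <;> fin_cases j <;> simp

theorem koszulMat_mulVec (p : Fin 4 → MvPolynomial (Fin 4) ℝ) :
    (koszulMat p).mulVec (fun i => X i) = 0 := by
  rw [koszulMat_apply]
  funext i
  fin_cases i <;> simp [Matrix.mulVec, dotProduct, Fin.sum_univ_four] <;> ring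

theorem koszulMat_isHomogeneous {p : Fin 4 → MvPolynomial (Fin 4) ℝ} {n : ℕ}
    (hp : ∀ i, (p i).IsHomogeneous n) (i j : Fin 4) :
    (koszulMat p i j).IsHomogeneous (n + 1) := by
  have h (a b c d : Fin 4) : (p a * X b - p c * X d).IsHomogeneous (n + 1) :=
    ((hp a).mul (isHomogeneous_X ℝ b)).sub ((hp c).mul (isHomogeneous_X ℝ d))
  rw [koszulMat_apply]
  fin_cases i <;> fin_cases j <;> first | exact h _ _ _ _ | exact isHomogeneous_zero _ _ _

/-- The coefficients of the exterior derivative of the 2-form with coefficients `B`, in the basis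
of 3-forms used by `koszulMat`. -/
noncomputable def koszulHomotopy (B : Matrix (Fin 4) (Fin 4) (MvPolynomial (Fin 4) ℝ)) :
    Fin 4 → MvPolynomial (Fin 4) ℝ :=
  ![pderiv 1 (B 2 3) - pderiv 2 (B 1 3) + pderiv 3 (B 1 2),
    -pderiv 0 (B 2 3) + pderiv 2 (B 0 3) - pderiv 3 (B 0 2),
    pderiv 0 (B 1 3) - pderiv 1 (B 0 3) + pderiv 3 (B 0 1),
    -pderiv 0 (B 1 2) + pderiv 1 (B 0 2) - pderiv 2 (B 0 1)]

theorem koszulHomotopy_isHomogeneous {B : Matrix (Fin 4) (Fin 4) (MvPolynomial (Fin 4) ℝ)} {k : ℕ}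
    (hB : ∀ i j, (B i j).IsHomogeneous k) (i : Fin 4) :
    (koszulHomotopy B i).IsHomogeneous (k - 1) := by
  have h (a b c : Fin 4) : (pderiv a (B b c)).IsHomogeneous (k - 1) := (hB b c).pderiv
  fin_cases i
  · exact ((h _ _ _).sub (h _ _ _)).add (h _ _ _)
  · exact ((h _ _ _).neg.add (h _ _ _)).sub (h _ _ _)
  · exact ((h _ _ _).sub (h _ _ _)).add (h _ _ _)
  · exact ((h _ _ _).neg.add (h _ _ _)).sub (h _ _ _)

/-- Cartan's formula for the Euler field, applied to a homogeneous 2-form `B` with vanishing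
contraction. It follows from Euler's identity for the entries and the derivatives of `B x = 0`. -/
theorem koszulMat_koszulHomotopy {B : Matrix (Fin 4) (Fin 4) (MvPolynomial (Fin 4) ℝ)} {k : ℕ}
    (hB : ∀ i j, (B i j).IsHomogeneous k) (hskew : Bᵀ = -B)
    (hx : B.mulVec (fun i => X i) = 0) :
    koszulMat (koszulHomotopy B) = ((k : ℝ) + 2) • B := by
  have hs (i j : Fin 4) : B j i = -B i j := congrFun (congrFun hskew i) j
  have hd (i : Fin 4) : B i i = 0 := by
    have h2 : (2 : MvPolynomial (Fin 4) ℝ) * B i i = 0 := by linear_combination hs i i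
    simpa using h2
  have hrow (i : Fin 4) : B i 0 * X 0 + B i 1 * X 1 + B i 2 * X 2 + B i 3 * X 3 = 0 := by
    simpa [Matrix.mulVec, dotProduct, Fin.sum_univ_four] using congrFun hx i
  have hE (i j : Fin 4) := (hB i j).sum_X_mul_pderiv
  simp only [Fin.sum_univ_four, nsmul_eq_mul] at hE
  have hD (l i : Fin 4) := congrArg (pderiv l) (hrow i)
  simp only [map_add, map_zero, Derivation.leibniz, smul_eq_mul] at hD
  have hC : (C ((k : ℝ) + 2) : MvPolynomial (Fin 4) ℝ) = (k : MvPolynomial (Fin 4) ℝ) + 2 := by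
    rw [map_add, map_natCast, map_ofNat]
  have hupper (i j : Fin 4) (hij : i < j) :
      koszulMat (koszulHomotopy B) i j = ((k : ℝ) + 2) • B i j := by
    have e := hE i j
    have d1 := hD j i
    have d2 := hD i j
    rw [MvPolynomial.smul_eq_C_mul, hC, koszulMat_apply]
    fin_cases i <;> fin_cases j <;> first
      | exact absurd hij (by decide)
      | (simp [koszulHomotopy, pderiv_X, hd, hs 0 1, hs 0 2, hs 0 3, hs 1 2, hs 1 3, hs 2 3]
          at e d1 d2 ⊢
         linear_combination e - d1 + d2)
  have hT (i j : Fin 4) : koszulMat (koszulHomotopy B) j i = -koszulMat (koszulHomotopy B) i j :=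
    congrFun (congrFun (koszulMat_transpose (koszulHomotopy B)) i) j
  ext1 i j
  rw [Matrix.smul_apply]
  rcases lt_trichotomy i j with h | rfl | h
  · exact hupper i j h
  · rw [hd, smul_zero, koszulMat_apply]
    fin_cases i <;> rfl
  · rw [hT j i, hs j i, hupper j i h, smul_neg]

theorem exists_eq_X_mul {p : Fin 4 → MvPolynomial (Fin 4) ℝ} (hp : koszulMat p = 0) :
    ∃ q, ∀ i, p i = X i * q := by
  rw [koszulMat_apply] at hp
  have h1 : p 0 * X 1 - p 1 * X 0 = 0 := by simpa using congrFun (congrFun hp 2) 3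
  have h2 : p 2 * X 0 - p 0 * X 2 = 0 := by simpa using congrFun (congrFun hp 1) 3
  have h3 : p 0 * X 3 - p 3 * X 0 = 0 := by simpa using congrFun (congrFun hp 1) 2
  have hdvd : (X 0 : MvPolynomial (Fin 4) ℝ) ∣ p 0 := by
    have : (X 0 : MvPolynomial (Fin 4) ℝ) ∣ p 0 * X 1 := ⟨p 1, by linear_combination h1⟩
    refine (X_prime.dvd_or_dvd this).resolve_right fun h => ?_
    simp [X_dvd_X] at h
  obtain ⟨q, hq⟩ := hdvd
  have h0 : (X 0 : MvPolynomial (Fin 4) ℝ) ≠ 0 := X_ne_zero 0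
  refine ⟨q, fun i => ?_⟩
  fin_cases i
  · exact hq
  · refine mul_left_cancel₀ h0 ?_
    simp only [Fin.mk_one]
    linear_combination -h1 + X 1 * hq
  · refine mul_left_cancel₀ h0 ?_
    simp only [Fin.reduceFinMk]
    linear_combination h2 + X 2 * hq
  · refine mul_left_cancel₀ h0 ?_
    simp only [Fin.reduceFinMk]
    linear_combination -h3 + X 3 * hq

/-- A quotient of a homogeneous polynomial of degree `n` by a variable is homogeneous of degree
`n - 1`; stated without subtraction, so that for `n = 0` it forces the quotient to vanish. -/
theorem degree_add_one_of_isHomogeneous_X_mul {q : MvPolynomial (Fin 4) ℝ} {i : Fin 4} {n : ℕ}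
    (h : (X i * q).IsHomogeneous n) {d : Fin 4 →₀ ℕ} (hd : coeff d q ≠ 0) : d.degree + 1 = n := by
  by_contra hne
  refine hd ?_
  rw [← coeff_X_mul d i q]
  refine h.coeff_eq_zero ?_
  rw [map_add, Finsupp.degree_single]
  omega

/-- The restriction of `koszulMat` to vectors of homogeneous polynomials of degree `n`. -/
noncomputable def koszulMatHom (n : ℕ) :
    (Fin 4 → homogeneousSubmodule (Fin 4) ℝ n) →ₗ[ℝ]
      Matrix (Fin 4) (Fin 4) (MvPolynomial (Fin 4) ℝ) :=
  koszulMat ∘ₗ (homogeneousSubmodule (Fin 4) ℝ n).subtype.compLeft (Fin 4)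

theorem koszulMatHom_apply (n : ℕ) (p : Fin 4 → homogeneousSubmodule (Fin 4) ℝ n) :
    koszulMatHom n p = koszulMat fun i => (p i : MvPolynomial (Fin 4) ℝ) := rfl

/-- The Koszul map `q ↦ q x` from degree `m` to degree `m + 1`. -/
noncomputable def mulXHom (m : ℕ) :
    homogeneousSubmodule (Fin 4) ℝ m →ₗ[ℝ] (Fin 4 → homogeneousSubmodule (Fin 4) ℝ (m + 1)) where
  toFun q i := ⟨X i * (q : MvPolynomial (Fin 4) ℝ), by
    rw [add_comm m 1]
    exact (isHomogeneous_X ℝ i).mul q.2⟩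
  map_add' q r := by
    funext i
    ext1
    simp [mul_add]
  map_smul' c q := by
    funext i
    ext1
    simp

theorem mulXHom_injective (m : ℕ) : Function.Injective (mulXHom m) := by
  intro q r h
  have h0 : X 0 * (q : MvPolynomial (Fin 4) ℝ) = X 0 * (r : MvPolynomial (Fin 4) ℝ) :=
    congrArg Subtype.val (congrFun h 0)
  exact Subtype.ext (mul_left_cancel₀ (X_ne_zero 0) h0)

theorem ker_koszulMatHom_succ (m : ℕ) :
    LinearMap.ker (koszulMatHom (m + 1)) = LinearMap.range (mulXHom m) := by
  ext p
  constructor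
  · intro hp
    obtain ⟨q, hq⟩ := exists_eq_X_mul (LinearMap.mem_ker.mp hp)
    have hq' (i : Fin 4) : (p i : MvPolynomial (Fin 4) ℝ) = X i * q := hq i
    have hhom : q.IsHomogeneous m := by
      intro d hd
      have h := degree_add_one_of_isHomogeneous_X_mul (hq' 0 ▸ (p 0).2) hd
      change Finsupp.weight (fun _ => 1) d = m
      rw [← Finsupp.degree_eq_weight_one]
      exact Nat.succ_injective h
    exact ⟨⟨q, hhom⟩, funext fun i => Subtype.ext (hq' i).symm⟩
  · rintro ⟨q, rfl⟩
    rw [LinearMap.mem_ker, koszulMatHom_apply, koszulMat_apply]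
    ext1 i j
    fin_cases i <;> fin_cases j <;> simp [mulXHom] <;> ring

theorem ker_koszulMatHom_zero : LinearMap.ker (koszulMatHom 0) = ⊥ := by
  rw [LinearMap.ker_eq_bot']
  intro p hp
  obtain ⟨q, hq⟩ := exists_eq_X_mul hp
  have hq' (i : Fin 4) : (p i : MvPolynomial (Fin 4) ℝ) = X i * q := hq i
  have h0 : q = 0 := by
    ext d
    by_contra hd
    have h := degree_add_one_of_isHomogeneous_X_mul (hq' 0 ▸ (p 0).2) hd
    omega
  funext i
  exact Subtype.ext (by simp [hq', h0])

theorem finrank_ker_koszulMatHom (n : ℕ) :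
    Module.finrank ℝ (LinearMap.ker (koszulMatHom n)) = (n + 2).choose 3 := by
  cases n with
  | zero => rw [ker_koszulMatHom_zero, finrank_bot]; rfl
  | succ m =>
    rw [ker_koszulMatHom_succ, LinearMap.finrank_range_of_inj (mulXHom_injective m),
      finrank_homogeneousSubmodule_four]

theorem finrank_range_koszulMatHom (n : ℕ) :
    Module.finrank ℝ (LinearMap.range (koszulMatHom n)) =
      3 * (n + 3).choose 3 + (n + 2).choose 2 := by
  have h := LinearMap.finrank_range_add_finrank_ker (koszulMatHom n)
  rw [finrank_ker_koszulMatHom, Module.finrank_pi_fintype] at h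
  simp only [finrank_homogeneousSubmodule_four, Finset.sum_const, Finset.card_univ,
    Fintype.card_fin, smul_eq_mul] at h
  have hP : (n + 3).choose 3 = (n + 2).choose 2 + (n + 2).choose 3 := Nat.choose_succ_succ _ _
  omega

/-- The space of 4×4 skew-symmetric matrices `B` with homogeneous degree-`k`
polynomial entries satisfying `B x = 0` has dimension
`3·binom(k+2,3) + binom(k+1,2)`, i.e. `3·dim P̃^{k−1}(ℝ⁴) + dim P̃^{k−1}(ℝ³)`. -/
theorem dim_skew_space (k : ℕ) :
    ∃ S : Submodule ℝ (Matrix (Fin 4) (Fin 4) (MvPolynomial (Fin 4) ℝ)),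
      (∀ B, B ∈ S ↔
        ((∀ i j, B i j ∈ homogeneousSubmodule (Fin 4) ℝ k) ∧
         Bᵀ = -B ∧
         B.mulVec (fun i => X i) = 0)) ∧
      Module.finrank ℝ S = 3 * Nat.choose (k + 2) 3 + Nat.choose (k + 1) 2 := by
  cases k with
  | zero =>
    refine ⟨⊥, fun B => ⟨?_, ?_⟩, by simp⟩
    · intro hB
      rw [Submodule.mem_bot] at hB
      subst hB
      refine ⟨fun i j => Submodule.zero_mem _, by simp, by simp⟩
    · rintro ⟨hB, hs, hx⟩
      -- The entries are constants, so their derivatives vanish.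
      have hz (a b c : Fin 4) : pderiv a (B b c) = 0 := by
        have h := hB b c
        rw [mem_homogeneousSubmodule, ← totalDegree_zero_iff_isHomogeneous,
          totalDegree_eq_zero_iff_eq_C] at h
        rw [h, pderiv_C]
      have hzero : koszulHomotopy B = 0 := by
        funext i
        fin_cases i <;> simp [koszulHomotopy, hz]
      have h := koszulMat_koszulHomotopy hB hs hx
      rw [hzero, map_zero] at h
      simpa using h.symm
  | succ n =>
    refine ⟨LinearMap.range (koszulMatHom n), fun B => ⟨?_, ?_⟩, finrank_range_koszulMatHom n⟩
    · rintro ⟨p, rfl⟩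
      exact ⟨koszulMat_isHomogeneous fun i => (p i).2, koszulMat_transpose _, koszulMat_mulVec _⟩
    · rintro ⟨hB, hs, hx⟩
      have hne : ((n + 1 : ℕ) : ℝ) + 2 ≠ 0 := by positivity
      have hmem : (((n + 1 : ℕ) : ℝ) + 2) • B ∈ LinearMap.range (koszulMatHom n) :=
        ⟨fun i => ⟨koszulHomotopy B i, koszulHomotopy_isHomogeneous hB i⟩,
          koszulMat_koszulHomotopy hB hs hx⟩
      exact (Submodule.smul_mem_iff _ hne).mp hmem
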